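/- Let D ⊆ [n]² be a diagram with columns D_j = {i : (i,j) ∈ D}. Then the set of lattice points of the Schubitope S_D is exactly { ξ^C : C = (C_1,...,C_n), C_j ≤ D_j for all j }, where ξ^C_i = #{ j : i ∈ C_j }. In particular, every lattice point of S_D satisfies all the defining inequalities with the associated combinatorial witness, and S_D is the convex hull of this set of lattice points. -/

import Mathlib

open Finset

/-- `DomLE R S`: `R` and `S` have the same cardinality and, for each `k`, the `k`-th least
element of `R` does not exceed the `k`-th least element of `S`.  The bases of the Schubert
matroid `SM_n(S)` are exactly the `B` with `DomLE B S`. -/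
def DomLE {α : Type*} [LinearOrder α] (R S : Finset α) : Prop :=
  R.card = S.card ∧
    ∀ (k : ℕ) (hR : k < (R.sort (· ≤ ·)).length) (hS : k < (S.sort (· ≤ ·)).length),
      (R.sort (· ≤ ·)).get ⟨k, hR⟩ ≤ (S.sort (· ≤ ·)).get ⟨k, hS⟩

/-- Auxiliary greedy matching count for a parenthesis word (`true` = '(', `false` = ')'),
given the current number of unmatched open parentheses. -/
def matchedPairsAux : List Bool → ℕ → ℕ
  | [], _ => 0
  | true :: rest, o => matchedPairsAux rest (o + 1)
  | false :: rest, 0 => matchedPairsAux rest 0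
  | false :: rest, o + 1 => matchedPairsAux rest o + 1

/-- The number of paired `()`'s in a parenthesis word (`true` = '(', `false` = ')'). -/
def matchedPairs (w : List Bool) : ℕ := matchedPairsAux w 0

/-- Column `j` of a diagram `D ⊆ [n]²`: the set `D_j = {i : (i,j) ∈ D}`. -/
def colSet {n : ℕ} (D : Finset (Fin n × Fin n)) (j : Fin n) : Finset (Fin n) :=
  Finset.univ.filter fun i => (i, j) ∈ D

/-- The parenthesis part of `word_{j,I}(D)`: reading rows `i` from top to bottom, record
'(' (= `true`) if `(i,j) ∉ D` and `i ∈ I`, and ')' (= `false`) if `(i,j) ∈ D` and `i ∉ I`.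
(The `⋆`'s, at positions with `(i,j) ∈ D` and `i ∈ I`, play no role in the matching.) -/
def colWord {n : ℕ} (D : Finset (Fin n × Fin n)) (j : Fin n) (I : Finset (Fin n)) :
    List Bool :=
  (List.finRange n).filterMap fun i =>
    if (i, j) ∈ D then (if i ∈ I then none else some false)
    else (if i ∈ I then some true else none)

/-- `θ_D^j(I)`: the number of paired `()`'s plus the number of `⋆`'s in `word_{j,I}(D)`. -/
def thetaCol {n : ℕ} (D : Finset (Fin n × Fin n)) (j : Fin n) (I : Finset (Fin n)) : ℕ :=
  matchedPairs (colWord D j I) + (colSet D j ∩ I).card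

/-- `θ_D(I) = Σ_{j=1}^n θ_D^j(I)`. -/
def theta {n : ℕ} (D : Finset (Fin n × Fin n)) (I : Finset (Fin n)) : ℕ :=
  ∑ j : Fin n, thetaCol D j I

/-- The Schubitope `S_D` of a diagram `D ⊆ [n]²`. -/
def schubitope {n : ℕ} (D : Finset (Fin n × Fin n)) : Set (Fin n → ℝ) :=
  {a | (∀ i, 0 ≤ a i) ∧ (∑ i, a i) = (D.card : ℝ) ∧
    ∀ I : Finset (Fin n), ∑ i ∈ I, a i ≤ (theta D I : ℝ)}

/-!
`S_D` is the base polytope of the submodular function `theta D`. At an extreme point of such a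
polytope any two coordinates are separated by a tight inequality, and tight sets are closed under
intersection, so peeling off smaller and smaller tight sets shows that extreme points of an
integral base polytope are integral; by Krein–Milman the polytope is the convex hull of its lattice
points.

Greedy parenthesis matching computes a minimum over cuts: `θ_D^j(I)` is the minimum over `m` of
`#{i ∈ I | i < m} + #{i ∈ D_j | m ≤ i}`. This gives the submodularity of `theta D`, the
inequalities for the vectors `ξ^C`, and Hall's condition for a matching that turns a lattice point
into a tuple `C`: the cell `(i, j)` is matched either to a box of `D` weakly below it in column `j`
(and then `i ∈ C_j`) or to one of `n - a_i` spare slots of row `i`.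
-/

open scoped Topology

theorem finite_setOf_mem_and_forall_int {α : Type*} [Finite α] {s : Set (α → ℝ)}
    (hs : IsCompact s) :
    {p | p ∈ s ∧ ∀ i, ∃ m : ℤ, p i = m}.Finite := by
  have hemb : Topology.IsClosedEmbedding (Pi.map fun (_ : α) (m : ℤ) ↦ (m : ℝ)) :=
    .piMap fun _ ↦ Int.isClosedEmbedding_coe_real
  refine ((hemb.isCompact_preimage hs).finite_of_discrete.image
    (Pi.map fun (_ : α) (m : ℤ) ↦ (m : ℝ))).subset ?_
  rintro p ⟨hps, hp⟩
  choose a ha using hp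
  obtain rfl : Pi.map (fun _ (m : ℤ) ↦ (m : ℝ)) a = p := funext fun i ↦ (ha i).symm
  exact Set.mem_image_of_mem _ hps

section BasePolytope

variable {α : Type*}

/-- A submodular set function, on the lattice of finite sets. -/
def Submodular {β : Type*} [DecidableEq α] [Add β] [LE β] (f : Finset α → β) : Prop :=
  ∀ A B, f (A ∪ B) + f (A ∩ B) ≤ f A + f B

variable [Fintype α] {f : Finset α → ℝ} {p v : α → ℝ}

/-- The base polytope of a set function `f`, usually considered for submodular `f`. A set `I` with
`∑ i ∈ I, a i = f I` is called tight at `a`. -/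
def basePolytope (f : Finset α → ℝ) : Set (α → ℝ) :=
  {a | ∑ i, a i = f univ ∧ ∀ I, ∑ i ∈ I, a i ≤ f I}

theorem convex_basePolytope (f : Finset α → ℝ) : Convex ℝ (basePolytope f) := by
  intro x hx y hy s t hs ht hst
  have hsum (I : Finset α) :
      ∑ i ∈ I, (s • x + t • y) i = s * ∑ i ∈ I, x i + t * ∑ i ∈ I, y i := by
    simp [sum_add_distrib, mul_sum]
  refine ⟨?_, fun I ↦ ?_⟩
  · rw [hsum, hx.1, hy.1, ← add_mul, hst, one_mul]
  · calc ∑ i ∈ I, (s • x + t • y) i = s * ∑ i ∈ I, x i + t * ∑ i ∈ I, y i := hsum I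
      _ ≤ s * f I + t * f I := by gcongr <;> apply_rules [hx.2, hy.2]
      _ = f I := by rw [← add_mul, hst, one_mul]

theorem isClosed_basePolytope (f : Finset α → ℝ) : IsClosed (basePolytope f) := by
  simp only [basePolytope, Set.ofPred_and, Set.ofPred_forall]
  exact (isClosed_eq (by fun_prop) (by fun_prop)).inter
    (isClosed_iInter fun I ↦ isClosed_le (by fun_prop) (by fun_prop))

theorem eventually_add_smul_mem_basePolytope (hp : p ∈ basePolytope f)
    (hv : ∀ I, ∑ i ∈ I, p i = f I → ∑ i ∈ I, v i = 0) :
    ∀ᶠ ε in 𝓝 (0 : ℝ), p + ε • v ∈ basePolytope f := by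
  have hsum (ε : ℝ) (I : Finset α) :
      ∑ i ∈ I, (p + ε • v) i = ∑ i ∈ I, p i + ε * ∑ i ∈ I, v i := by
    simp [sum_add_distrib, mul_sum]
  have hle (I : Finset α) : ∀ᶠ ε in 𝓝 (0 : ℝ), ∑ i ∈ I, (p + ε • v) i ≤ f I := by
    simp only [hsum]
    rcases (hp.2 I).eq_or_lt with htight | hslack
    · simp [hv I htight, htight]
    · have hlim : Filter.Tendsto (fun ε : ℝ ↦ ∑ i ∈ I, p i + ε * ∑ i ∈ I, v i) (𝓝 0)
          (𝓝 (∑ i ∈ I, p i)) := Continuous.tendsto' (by fun_prop) _ _ (by simp)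
      exact (hlim.eventually_lt_const hslack).mono fun _ ↦ le_of_lt
  filter_upwards [Filter.eventually_all.2 hle] with ε hε
  exact ⟨by rw [hsum, hv univ hp.1, mul_zero, add_zero, hp.1], hε⟩

theorem eq_zero_of_mem_extremePoints_basePolytope (hp : p ∈ (basePolytope f).extremePoints ℝ)
    (hv : ∀ I, ∑ i ∈ I, p i = f I → ∑ i ∈ I, v i = 0) : v = 0 := by
  have hadd := eventually_add_smul_mem_basePolytope hp.1 hv
  have hsub : ∀ᶠ ε in 𝓝 (0 : ℝ), p + ε • -v ∈ basePolytope f :=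
    eventually_add_smul_mem_basePolytope hp.1 fun I hI ↦ by simp [hv I hI]
  obtain ⟨ε, ⟨hεadd, hεsub⟩, hε⟩ :=
    (((hadd.and hsub).filter_mono nhdsWithin_le_nhds).and
      (self_mem_nhdsWithin (s := {(0 : ℝ)}ᶜ))).exists
  have hmid : p ∈ openSegment ℝ (p + ε • v) (p + ε • -v) :=
    ⟨1 / 2, 1 / 2, by norm_num, by norm_num, by norm_num, by module⟩
  have hp_eq : p + ε • v = p := ((mem_extremePoints.1 hp).2 _ hεadd _ hεsub hmid).1
  exact (smul_eq_zero.1 (add_eq_left.1 hp_eq)).resolve_left hε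

theorem exists_tight_separating_of_mem_extremePoints
    (hp : p ∈ (basePolytope f).extremePoints ℝ) {x y : α} (hxy : x ≠ y) :
    ∃ B, ∑ i ∈ B, p i = f B ∧ ¬(x ∈ B ↔ y ∈ B) := by
  classical
  by_contra! hsep
  have hzero : (Pi.single x 1 - Pi.single y 1 : α → ℝ) = 0 :=
    eq_zero_of_mem_extremePoints_basePolytope hp fun I hI ↦ by
      simp [Pi.single_apply, hsep I hI]
  simpa [hxy] using congrFun hzero x

theorem Submodular.sum_inter_eq [DecidableEq α] (hf : Submodular f) (hp : p ∈ basePolytope f)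
    {A B : Finset α} (hA : ∑ i ∈ A, p i = f A) (hB : ∑ i ∈ B, p i = f B) :
    ∑ i ∈ A ∩ B, p i = f (A ∩ B) := by
  have hmodular := sum_union_inter (s₁ := A) (s₂ := B) (f := p)
  linarith [hf A B, hp.2 (A ∪ B), hp.2 (A ∩ B)]

theorem Submodular.apply_mem_of_mem_extremePoints [DecidableEq α] (hf : Submodular f)
    {G : AddSubgroup ℝ} (hG : ∀ I, f I ∈ G) (hp : p ∈ (basePolytope f).extremePoints ℝ) (x : α) :
    p x ∈ G := by
  suffices h : ∀ A, ∑ i ∈ A, p i = f A → ∀ x ∈ A, p x ∈ G from h univ hp.1.1 x (mem_univ x)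
  intro A
  induction A using Finset.strongInduction with
  | H A ih =>
    intro hA x hx
    have mem_of_tight {B : Finset α} (hB : ∑ i ∈ B, p i = f B) (hAB : ¬A ⊆ B) {y : α}
        (hyA : y ∈ A) (hyB : y ∈ B) : p y ∈ G :=
      ih (A ∩ B) (by grind) (hf.sum_inter_eq hp.1 hA hB) y (mem_inter.2 ⟨hyA, hyB⟩)
    by_cases hsmaller : ∃ B, ∑ i ∈ B, p i = f B ∧ ¬A ⊆ B ∧ x ∈ B
    · obtain ⟨B, hB, hAB, hxB⟩ := hsmaller
      exact mem_of_tight hB hAB hx hxB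
    · have hothers : ∀ y ∈ A.erase x, p y ∈ G := fun y hy ↦ by
        obtain ⟨hyx, hyA⟩ := mem_erase.1 hy
        obtain ⟨B, hB, hBsep⟩ := exists_tight_separating_of_mem_extremePoints hp hyx
        exact mem_of_tight hB (by grind) hyA (by grind)
      rw [eq_sub_of_add_eq (add_sum_erase A p hx), hA]
      exact G.sub_mem (hG A) (G.sum_mem hothers)

theorem basePolytope_subset_Icc [DecidableEq α] (f : Finset α → ℝ) :
    basePolytope f ⊆ Set.Icc (fun i ↦ f univ - f (univ.erase i)) (fun i ↦ f {i}) := by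
  refine fun a ha ↦ ⟨fun i ↦ ?_, fun i ↦ by simpa using ha.2 {i}⟩
  have hsplit := add_sum_erase univ a (mem_univ i)
  linarith [ha.1, ha.2 (univ.erase i)]

theorem nonneg_of_mem_basePolytope (hf : Monotone f) (hp : p ∈ basePolytope f) : 0 ≤ p := by
  classical
  exact fun i ↦ (sub_nonneg.2 (hf (erase_subset i univ))).trans ((basePolytope_subset_Icc f hp).1 i)

theorem isCompact_basePolytope (f : Finset α → ℝ) : IsCompact (basePolytope f) := by
  classical
  exact isCompact_Icc.of_isClosed_subset (isClosed_basePolytope f) (basePolytope_subset_Icc f)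

theorem Submodular.basePolytope_eq_convexHull_int [DecidableEq α] (hf : Submodular f)
    (hint : ∀ I, ∃ m : ℤ, f I = m) :
    basePolytope f = convexHull ℝ {p | p ∈ basePolytope f ∧ ∀ i, ∃ m : ℤ, p i = m} := by
  have hcompact := isCompact_basePolytope f
  have hextreme : (basePolytope f).extremePoints ℝ ⊆
      {p | p ∈ basePolytope f ∧ ∀ i, ∃ m : ℤ, p i = m} := fun p hp ↦ by
    have hrange (I : Finset α) : f I ∈ (Int.castAddHom ℝ).range :=
      (hint I).imp fun _ ↦ Eq.symm
    exact ⟨hp.1, fun i ↦ (hf.apply_mem_of_mem_extremePoints hrange hp i).imp fun _ ↦ Eq.symm⟩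
  refine subset_antisymm ?_ (convexHull_min (fun p hp ↦ hp.1) (convex_basePolytope f))
  calc basePolytope f = closure (convexHull ℝ ((basePolytope f).extremePoints ℝ)) :=
        (closure_convexHull_extremePoints hcompact (convex_basePolytope f)).symm
    _ ⊆ _ := closure_minimal (convexHull_mono hextreme)
        ((finite_setOf_mem_and_forall_int hcompact).isCompact_convexHull ℝ).isClosed

end BasePolytope

section MatchedPairs

theorem matchedPairsAux_le_count_false (w : List Bool) (o : ℕ) :
    matchedPairsAux w o ≤ w.count false := by
  fun_induction matchedPairsAux w o <;> grind

theorem matchedPairsAux_append_le (u v : List Bool) (o : ℕ) :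
    matchedPairsAux (u ++ v) o ≤ o + u.count true + v.count false := by
  induction u generalizing o with
  | nil => simpa using (matchedPairsAux_le_count_false v o).trans (Nat.le_add_left _ _)
  | cons b u ih =>
    rcases b with _ | _ <;> rcases o with _ | o <;> grind [matchedPairsAux]

theorem exists_append_count_le_matchedPairsAux (w : List Bool) (o : ℕ) :
    (∃ u v, w = u ++ v ∧ o + u.count true + v.count false ≤ matchedPairsAux w o) ∨
      w.count false ≤ matchedPairsAux w o := by
  fun_induction matchedPairsAux w o with
  | case1 => simp
  | case2 w o ih =>
    rcases ih with ⟨u, v, rfl, h⟩ | h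
    · exact .inl ⟨true :: u, v, rfl, by simp; lia⟩
    · exact .inr (by simpa using h)
  | case3 w ih =>
    rcases ih with ⟨u, v, rfl, h⟩ | h
    · exact .inl ⟨false :: u, v, rfl, by simpa using h⟩
    · exact .inl ⟨[false], w, rfl, by simpa using h⟩
  | case4 w o ih =>
    rcases ih with ⟨u, v, rfl, h⟩ | h
    · exact .inl ⟨false :: u, v, rfl, by simp; lia⟩
    · exact .inr (by simpa using h)

theorem matchedPairs_append_le (u v : List Bool) :
    matchedPairs (u ++ v) ≤ u.count true + v.count false := by
  simpa [matchedPairs] using matchedPairsAux_append_le u v 0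

theorem exists_append_count_le_matchedPairs (w : List Bool) :
    ∃ u v, w = u ++ v ∧ u.count true + v.count false ≤ matchedPairs w := by
  rcases exists_append_count_le_matchedPairsAux w 0 with h | h
  · simpa [matchedPairs] using h
  · exact ⟨[], w, rfl, by simpa [matchedPairs] using h⟩

end MatchedPairs

section DomLE

variable {α : Type*} [LinearOrder α] {R S : Finset α}

theorem card_filter_eq_card_filter_orderEmbOfFin {k : ℕ} (hR : #R = k) (P : α → Prop)
    [DecidablePred P] : #{x ∈ R | P x} = #{l | P (R.orderEmbOfFin hR l)} := by
  conv_lhs => rw [← map_orderEmbOfFin_univ R hR, filter_map, card_map]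
  rfl

theorem domLE_iff_orderEmbOfFin_le :
    DomLE R S ↔ ∃ h : #R = #S, ∀ k, R.orderEmbOfFin h k ≤ S.orderEmbOfFin rfl k := by
  refine ⟨fun ⟨hcard, hle⟩ ↦ ⟨hcard, fun k ↦ ?_⟩, fun ⟨hcard, hle⟩ ↦ ⟨hcard, fun k _ hS ↦ ?_⟩⟩
  · exact hle k (by simp [hcard]) (by simp)
  · exact hle ⟨k, by simpa using hS⟩

theorem DomLE.card_filter_le (h : DomLE R S) {P : α → Prop} [DecidablePred P]
    (hP : Monotone P) : #{x ∈ R | P x} ≤ #{x ∈ S | P x} := by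
  obtain ⟨hcard, hle⟩ := domLE_iff_orderEmbOfFin_le.1 h
  rw [card_filter_eq_card_filter_orderEmbOfFin hcard,
    card_filter_eq_card_filter_orderEmbOfFin (R := S) rfl]
  exact card_le_card (monotone_filter_right _ fun k _ ↦ hP (hle k))

theorem domLE_of_card_filter_le (hcard : #R = #S)
    (h : ∀ x, #{y ∈ R | x ≤ y} ≤ #{y ∈ S | x ≤ y}) : DomLE R S := by
  refine domLE_iff_orderEmbOfFin_le.2 ⟨hcard, fun k ↦ ?_⟩
  by_contra! hlt
  refine (h (R.orderEmbOfFin hcard k)).not_gt ?_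
  rw [card_filter_eq_card_filter_orderEmbOfFin hcard,
    card_filter_eq_card_filter_orderEmbOfFin (R := S) rfl]
  calc #{l | R.orderEmbOfFin hcard k ≤ S.orderEmbOfFin rfl l} ≤ #(Ioi k) :=
        card_le_card fun l hl ↦ by
          simpa using hlt.trans_le (mem_filter.1 hl).2
    _ < #(Ici k) := card_lt_card ((ssubset_iff_of_subset Ioi_subset_Ici_self).2 ⟨k, by simp⟩)
    _ = #{l | R.orderEmbOfFin hcard k ≤ R.orderEmbOfFin hcard l} := by
        congr 1
        ext l
        simp

end DomLE

section Theta

variable {n : ℕ}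

theorem count_filterMap_eq_card_filter {α β : Type*} [DecidableEq α] [DecidableEq β] {l : List α}
    (hl : l.Nodup) (φ : α → Option β) (b : β) :
    (l.filterMap φ).count b = #{x ∈ l.toFinset | φ x = some b} := by
  rw [List.count_filterMap, List.countP_eq_length_filter,
    ← List.toFinset_card_of_nodup (hl.filter _), List.toFinset_filter]
  simp

theorem toFinset_take_finRange (m : ℕ) :
    ((List.finRange n).take m).toFinset = ({i | (i : ℕ) < m} : Finset (Fin n)) := by
  ext i
  simp only [List.mem_toFinset, List.mem_take_iff_getElem, List.getElem_finRange, mem_filter_univ]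
  exact ⟨by rintro ⟨k, hk, rfl⟩; simp at hk ⊢; lia, fun h ↦ ⟨i, by simpa using h, by simp⟩⟩

theorem toFinset_drop_finRange (m : ℕ) :
    ((List.finRange n).drop m).toFinset = ({i | m ≤ (i : ℕ)} : Finset (Fin n)) := by
  ext i
  simp only [List.mem_toFinset, List.mem_drop_iff_getElem, List.getElem_finRange, mem_filter_univ]
  exact ⟨by rintro ⟨k, hk, rfl⟩; simp, fun h ↦ ⟨i - m, by simp; lia, by ext; simp; lia⟩⟩

/-- The letter that row `i` contributes to `colWord D j I`, if any. -/
def colLetter (D : Finset (Fin n × Fin n)) (j : Fin n) (I : Finset (Fin n)) (i : Fin n) :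
    Option Bool :=
  if (i, j) ∈ D then (if i ∈ I then none else some false)
  else (if i ∈ I then some true else none)

/-- The bound on `#(B ∩ I)`, for `B ≤ S`, obtained by counting the rows before the cut `m` in `I`
and the remaining ones in `S`. -/
def cutCard (S I : Finset (Fin n)) (m : ℕ) : ℕ :=
  #{i ∈ I | i.val < m} + #{i ∈ S | m ≤ i.val}

theorem count_take_add_count_drop_add_card_inter (D : Finset (Fin n × Fin n)) (j : Fin n)
    (I : Finset (Fin n)) (m : ℕ) :
    (((List.finRange n).take m).filterMap (colLetter D j I)).count true +
        (((List.finRange n).drop m).filterMap (colLetter D j I)).count false +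
        #(colSet D j ∩ I) = cutCard (colSet D j) I m := by
  have hcard (A : Finset (Fin n)) : #A = ∑ i, if i ∈ A then 1 else 0 := by simp
  have hnodup := List.nodup_finRange n
  rw [count_filterMap_eq_card_filter (hnodup.sublist (List.take_sublist _ _)),
    count_filterMap_eq_card_filter (hnodup.sublist (List.drop_sublist _ _)),
    toFinset_take_finRange, toFinset_drop_finRange, cutCard]
  simp only [hcard, ← sum_add_distrib]
  refine sum_congr rfl fun i _ ↦ ?_
  simp only [mem_filter, mem_univ, true_and, mem_inter, colSet, colLetter]
  grind

variable (D : Finset (Fin n × Fin n)) (j : Fin n) {I : Finset (Fin n)}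

theorem thetaCol_le_cutCard (I : Finset (Fin n)) (m : ℕ) :
    thetaCol D j I ≤ cutCard (colSet D j) I m := by
  have hword : colWord D j I = ((List.finRange n).take m).filterMap (colLetter D j I) ++
      ((List.finRange n).drop m).filterMap (colLetter D j I) := by
    rw [← List.filterMap_append, List.take_append_drop]
    rfl
  rw [← count_take_add_count_drop_add_card_inter, thetaCol, hword]
  gcongr
  exact matchedPairs_append_le _ _

theorem exists_cutCard_le_thetaCol (I : Finset (Fin n)) :
    ∃ m, cutCard (colSet D j) I m ≤ thetaCol D j I := by
  obtain ⟨u, v, hword, hcount⟩ := exists_append_count_le_matchedPairs (colWord D j I)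
  obtain ⟨l₁, l₂, hl, rfl, rfl⟩ := List.filterMap_eq_append_iff.1 hword
  refine ⟨l₁.length, ?_⟩
  rw [← count_take_add_count_drop_add_card_inter, thetaCol, hl, List.take_left, List.drop_left]
  gcongr
  exact hcount

theorem thetaCol_mono : Monotone (thetaCol D j) := fun A B hAB ↦ by
  obtain ⟨m, hm⟩ := exists_cutCard_le_thetaCol D j B
  refine (thetaCol_le_cutCard D j A m).trans (le_trans ?_ hm)
  unfold cutCard
  gcongr

theorem thetaCol_le_card (I : Finset (Fin n)) : thetaCol D j I ≤ #I := by
  have hlt (i : Fin n) : ¬n ≤ i.val := i.is_lt.not_ge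
  simpa [cutCard, hlt] using thetaCol_le_cutCard D j I n

theorem thetaCol_univ : thetaCol D j univ = #(colSet D j) :=
  le_antisymm (by simpa [cutCard] using thetaCol_le_cutCard D j univ 0) (by simp [thetaCol])

theorem cutCard_union_add_cutCard_inter_le (S A B : Finset (Fin n)) {m m' : ℕ} (h : m ≤ m') :
    cutCard S (A ∪ B) m + cutCard S (A ∩ B) m' ≤ cutCard S A m + cutCard S B m' := by
  have hrows : #{i ∈ A ∪ B | i.val < m} + #{i ∈ A ∩ B | i.val < m'} ≤
      #{i ∈ A | i.val < m} + #{i ∈ B | i.val < m'} := by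
    rw [← card_union_add_card_inter, ← card_union_add_card_inter {i ∈ A | i.val < m}]
    gcongr ?_ + ?_ <;> exact card_le_card (by grind)
  simp only [cutCard]
  lia

theorem submodular_thetaCol : Submodular (thetaCol D j) := fun A B ↦ by
  obtain ⟨m, hm⟩ := exists_cutCard_le_thetaCol D j A
  obtain ⟨m', hm'⟩ := exists_cutCard_le_thetaCol D j B
  wlog h : m ≤ m' generalizing A B m m'
  · rw [union_comm, inter_comm, add_comm (thetaCol D j A)]
    exact this B A m' hm' m hm (not_le.1 h).le
  calc thetaCol D j (A ∪ B) + thetaCol D j (A ∩ B)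
      ≤ cutCard (colSet D j) (A ∪ B) m + cutCard (colSet D j) (A ∩ B) m' := by
        gcongr <;> apply thetaCol_le_cutCard
    _ ≤ cutCard (colSet D j) A m + cutCard (colSet D j) B m' :=
        cutCard_union_add_cutCard_inter_le _ A B h
    _ ≤ thetaCol D j A + thetaCol D j B := by gcongr

variable {D j} in
theorem DomLE.card_inter_le_thetaCol {B : Finset (Fin n)} (hB : DomLE B (colSet D j))
    (I : Finset (Fin n)) : #(B ∩ I) ≤ thetaCol D j I := by
  obtain ⟨m, hm⟩ := exists_cutCard_le_thetaCol D j I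
  calc #(B ∩ I) = #{i ∈ B ∩ I | i.val < m} + #{i ∈ B ∩ I | m ≤ i.val} := by
        simp only [← not_lt, card_filter_add_card_filter_not]
    _ ≤ #{i ∈ I | i.val < m} + #{i ∈ B | m ≤ i.val} := by
        gcongr
        exacts [inter_subset_right, inter_subset_left]
    _ ≤ cutCard (colSet D j) I m :=
        Nat.add_le_add_left (hB.card_filter_le fun x y hxy hx ↦ hx.trans hxy) _
    _ ≤ thetaCol D j I := hm

theorem thetaCol_add_card_le {U : Finset (Fin n)} (hU : U ⊆ I) :
    thetaCol D j I + #U ≤ #I + #{d ∈ colSet D j | ∃ i ∈ U, i ≤ d} := by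
  rcases U.eq_empty_or_nonempty with rfl | hne
  · simpa using thetaCol_le_card D j I
  have hrows : #{i ∈ I | i < U.min' hne} + #U ≤ #I := by
    rw [← card_union_of_disjoint]
    · exact card_le_card (by grind)
    · exact disjoint_left.2 fun i hi hiU ↦ (mem_filter.1 hi).2.not_ge (U.min'_le i hiU)
  have hboxes : #{d ∈ colSet D j | U.min' hne ≤ d} ≤ #{d ∈ colSet D j | ∃ i ∈ U, i ≤ d} :=
    card_le_card (monotone_filter_right _ fun d _ hd ↦ ⟨_, U.min'_mem hne, hd⟩)
  have hcut : thetaCol D j I ≤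
      #{i ∈ I | i < U.min' hne} + #{d ∈ colSet D j | U.min' hne ≤ d} :=
    thetaCol_le_cutCard D j I (U.min' hne)
  lia

theorem sum_card_colSet : ∑ j, #(colSet D j) = #D := by
  have hcard : #D = ∑ x, if x ∈ D then 1 else 0 := by simp
  rw [hcard, Fintype.sum_prod_type_right]
  simp only [colSet, card_filter]

theorem theta_mono : Monotone (theta D) := fun _ _ h ↦
  sum_le_sum fun j _ ↦ thetaCol_mono D j h

theorem theta_univ : theta D univ = #D := by
  simp only [theta, thetaCol_univ, sum_card_colSet]

theorem theta_le_mul_card (I : Finset (Fin n)) : theta D I ≤ n * #I := by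
  simpa [theta] using sum_le_sum fun j (_ : j ∈ univ) ↦ thetaCol_le_card D j I

theorem submodular_theta : Submodular (theta D) := fun A B ↦ by
  simp only [theta, ← sum_add_distrib]
  exact sum_le_sum fun j _ ↦ submodular_thetaCol D j A B

theorem schubitope_eq_basePolytope : schubitope D = basePolytope fun I ↦ (theta D I : ℝ) := by
  have hmono : Monotone fun I ↦ (theta D I : ℝ) := Nat.mono_cast.comp (theta_mono D)
  ext a
  simp only [schubitope, ← theta_univ]
  exact ⟨fun ha ↦ ha.2, fun ha ↦ ⟨nonneg_of_mem_basePolytope hmono ha, ha⟩⟩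

theorem schubitope_eq_convexHull_int :
    schubitope D = convexHull ℝ {p | p ∈ schubitope D ∧ ∀ i, ∃ m : ℤ, p i = m} := by
  have hsubmodular : Submodular fun I ↦ (theta D I : ℝ) := fun A B ↦ by
    simp only
    exact_mod_cast submodular_theta D A B
  rw [schubitope_eq_basePolytope]
  exact hsubmodular.basePolytope_eq_convexHull_int fun I ↦ ⟨theta D I, by simp⟩

end Theta

section RowCount

variable {ι κ : Type*} [DecidableEq ι] [Fintype κ]

/-- The vector `ξ^C` of a tuple `C` of finite sets. -/
def rowCount (C : κ → Finset ι) (i : ι) : ℕ := #{j | i ∈ C j}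

theorem sum_rowCount (C : κ → Finset ι) (I : Finset ι) :
    ∑ i ∈ I, rowCount C i = ∑ j, #(C j ∩ I) := by
  simp only [inter_comm (C _), ← filter_mem_eq_inter]
  exact sum_card_bipartiteAbove_eq_sum_card_bipartiteBelow fun i j ↦ i ∈ C j

end RowCount

section Lattice

variable {n : ℕ} {D : Finset (Fin n × Fin n)} {a : Fin n → ℕ}

theorem rowCount_mem_schubitope {C : Fin n → Finset (Fin n)} (hC : ∀ j, DomLE (C j) (colSet D j)) :
    (fun i ↦ (rowCount C i : ℝ)) ∈ schubitope D := by
  refine ⟨fun i ↦ Nat.cast_nonneg _, ?_, fun I ↦ ?_⟩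
  · simp only [← Nat.cast_sum, sum_rowCount, inter_univ, (hC _).1, sum_card_colSet]
  · rw [← Nat.cast_sum, sum_rowCount]
    exact mod_cast sum_le_sum fun j _ ↦ (hC j).card_inter_le_thetaCol I

/-- The boxes of `D` to which a cell of `W` can be matched: those weakly below such a cell, in the
same column (rows are numbered from the top). -/
def boxesBelow (D W : Finset (Fin n × Fin n)) : Finset (Fin n × Fin n) :=
  {x ∈ D | ∃ i ≤ x.1, (i, x.2) ∈ W}

/-- The spare slots of the rows in `I`, of which row `i` has `n - a i`. -/
def spareSlots (a : Fin n → ℕ) (I : Finset (Fin n)) : Finset (Σ _ : Fin n, ℕ) :=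
  I.sigma fun i ↦ range (n - a i)

/-- The possible partners of a cell in the matching that turns the lattice point `a` into a tuple
of column sets. -/
def hallTargets (D : Finset (Fin n × Fin n)) (a : Fin n → ℕ) (v : Fin n × Fin n) :
    Finset ((Fin n × Fin n) ⊕ Σ _ : Fin n, ℕ) :=
  (boxesBelow D {v}).disjSum (spareSlots a {v.1})

theorem inl_mem_hallTargets {x v : Fin n × Fin n} :
    .inl x ∈ hallTargets D a v ↔ x ∈ D ∧ v.1 ≤ x.1 ∧ v.2 = x.2 := by
  simp [hallTargets, boxesBelow, Prod.ext_iff, eq_comm]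

theorem inr_mem_hallTargets {s : Σ _ : Fin n, ℕ} {v : Fin n × Fin n} :
    .inr s ∈ hallTargets D a v ↔ s ∈ spareSlots a {v.1} :=
  inr_mem_disjSum

theorem card_add_theta_image_le (D W : Finset (Fin n × Fin n)) :
    #W + theta D (W.image Prod.fst) ≤ n * #(W.image Prod.fst) + #(boxesBelow D W) := by
  have hrows (j : Fin n) : colSet W j ⊆ W.image Prod.fst := fun i hi ↦
    mem_image_of_mem Prod.fst (mem_filter.1 hi).2
  have hboxes (j : Fin n) :
      colSet (boxesBelow D W) j = {d ∈ colSet D j | ∃ i ∈ colSet W j, i ≤ d} := by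
    ext d
    simp [colSet, boxesBelow, and_comm]
  calc #W + theta D (W.image Prod.fst)
      = ∑ j, (thetaCol D j (W.image Prod.fst) + #(colSet W j)) := by
        rw [sum_add_distrib, sum_card_colSet, add_comm, theta]
    _ ≤ ∑ j, (#(W.image Prod.fst) + #(colSet (boxesBelow D W) j)) :=
        sum_le_sum fun j _ ↦ (hboxes j).symm ▸ thetaCol_add_card_le D j (hrows j)
    _ = n * #(W.image Prod.fst) + #(boxesBelow D W) := by
        rw [sum_add_distrib, sum_card_colSet]
        simp

theorem card_le_card_biUnion_hallTargets (ha : ∀ I, ∑ i ∈ I, a i ≤ theta D I)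
    (W : Finset (Fin n × Fin n)) : #W ≤ #(W.biUnion (hallTargets D a)) := by
  set I := W.image Prod.fst
  have hunion : (boxesBelow D W).disjSum (spareSlots a I) ⊆ W.biUnion (hallTargets D a) := by
    rintro (x | s) h
    · simp only [inl_mem_disjSum, boxesBelow, mem_filter, mem_biUnion, inl_mem_hallTargets] at h ⊢
      grind
    · simp only [inr_mem_disjSum, spareSlots, mem_sigma, mem_biUnion, inr_mem_hallTargets] at h ⊢
      grind
  have hslots : n * #I ≤ #(spareSlots a I) + ∑ i ∈ I, a i := by
    simp only [spareSlots, card_sigma, card_range, ← sum_add_distrib]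
    rw [mul_comm, ← smul_eq_mul]
    exact card_nsmul_le_sum _ _ _ fun i _ ↦ le_tsub_add
  have hcard := card_le_card hunion
  rw [card_disjSum] at hcard
  have htheta := card_add_theta_image_le D W
  have haI := ha I
  lia

section Matching

variable {g : Fin n × Fin n → (Fin n × Fin n) ⊕ Σ _ : Fin n, ℕ}

/-- The column sets `C_j` of a matching `g`: the rows `i` whose cell `(i, j)` is matched to a box
of the diagram. -/
def matchedRows (g : Fin n × Fin n → (Fin n × Fin n) ⊕ Σ _ : Fin n, ℕ) (j : Fin n) :
    Finset (Fin n) :=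
  {i | (g (i, j)).isLeft}

theorem card_filter_matchedRows_le (hg : g.Injective) (hmem : ∀ v, g v ∈ hallTargets D a v)
    {P : Fin n → Prop} [DecidablePred P] (hP : Monotone P) (j : Fin n) :
    #{i ∈ matchedRows g j | P i} ≤ #{d ∈ colSet D j | P d} := by
  have hmaps : ∀ i ∈ ({i ∈ matchedRows g j | P i} : Finset (Fin n)),
      g (i, j) ∈ ({d ∈ colSet D j | P d} : Finset (Fin n)).image fun d ↦ .inl (d, j) := by
    intro i hi
    obtain ⟨hleft, hPi⟩ := mem_filter.1 hi
    obtain ⟨⟨d, k⟩, hx⟩ := Sum.isLeft_iff.1 (mem_filter.1 hleft).2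
    have hbox := hmem (i, j)
    rw [hx] at hbox
    obtain ⟨hD, hid, rfl⟩ := inl_mem_hallTargets.1 hbox
    rw [hx]
    exact mem_image_of_mem _ (by simpa [colSet, hD] using hP hid hPi)
  exact (card_le_card_of_injOn _ hmaps fun i _ i' _ h ↦ (Prod.ext_iff.1 (hg h)).1).trans
    card_image_le

theorem le_rowCount_matchedRows (hg : g.Injective) (hmem : ∀ v, g v ∈ hallTargets D a v)
    (ha : ∀ i, a i ≤ n) (i : Fin n) : a i ≤ rowCount (matchedRows g) i := by
  have hmaps : ∀ j ∈ ({j | i ∉ matchedRows g j} : Finset (Fin n)),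
      g (i, j) ∈ (spareSlots a {i}).image .inr := by
    intro j hj
    have hright : (g (i, j)).isRight := by simpa [matchedRows] using hj
    obtain ⟨s, hs⟩ := Sum.isRight_iff.1 hright
    have hslot := hmem (i, j)
    rw [hs] at hslot ⊢
    exact mem_image_of_mem _ (inr_mem_hallTargets.1 hslot)
  have hspare : #{j | i ∉ matchedRows g j} ≤ n - a i := by
    simpa [spareSlots] using (card_le_card_of_injOn _ hmaps
      fun j _ j' _ h ↦ (Prod.ext_iff.1 (hg h)).2).trans card_image_le
  have htotal : rowCount (matchedRows g) i + #{j | i ∉ matchedRows g j} = n := by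
    simpa [rowCount] using card_filter_add_card_filter_not (s := univ) (i ∈ matchedRows g ·)
  have hai := ha i
  lia

end Matching

theorem exists_domLE_rowCount_eq (hsum : ∑ i, a i = #D) (ha : ∀ I, ∑ i ∈ I, a i ≤ theta D I) :
    ∃ C : Fin n → Finset (Fin n), (∀ j, DomLE (C j) (colSet D j)) ∧ rowCount C = a := by
  obtain ⟨g, hg, hmem⟩ := (all_card_le_biUnion_card_iff_exists_injective (hallTargets D a)).1
    (card_le_card_biUnion_hallTargets ha)
  have han (i : Fin n) : a i ≤ n := by simpa using (ha {i}).trans (theta_le_mul_card D {i})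
  have hrow (i : Fin n) : a i ≤ rowCount (matchedRows g) i := le_rowCount_matchedRows hg hmem han i
  have hcol (j : Fin n) : #(matchedRows g j) ≤ #(colSet D j) := by
    simpa using card_filter_matchedRows_le hg hmem (monotone_const (c := True)) j
  have hrowsum : ∑ i, rowCount (matchedRows g) i = ∑ j, #(matchedRows g j) := by
    simp [sum_rowCount]
  have hcolsum : ∑ j, #(matchedRows g j) ≤ ∑ j, #(colSet D j) := sum_le_sum fun j _ ↦ hcol j
  have hle : ∑ i, a i ≤ ∑ i, rowCount (matchedRows g) i := sum_le_sum fun i _ ↦ hrow i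
  have htotal := sum_card_colSet D
  have hrow_eq : ∀ i ∈ univ, a i = rowCount (matchedRows g) i :=
    (sum_eq_sum_iff_of_le fun i _ ↦ hrow i).1 (by lia)
  have hcol_eq : ∀ j ∈ univ, #(matchedRows g j) = #(colSet D j) :=
    (sum_eq_sum_iff_of_le fun j _ ↦ hcol j).1 (by lia)
  refine ⟨matchedRows g, fun j ↦ domLE_of_card_filter_le (hcol_eq j (mem_univ j)) fun x ↦ ?_,
    funext fun i ↦ (hrow_eq i (mem_univ i)).symm⟩
  exact card_filter_matchedRows_le hg hmem (fun y z hyz hxy ↦ hxy.trans hyz) j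

theorem mem_schubitope_and_int_iff {p : Fin n → ℝ} :
    (p ∈ schubitope D ∧ ∀ i, ∃ m : ℤ, p i = m) ↔
      ∃ C : Fin n → Finset (Fin n),
        (∀ j, DomLE (C j) (colSet D j)) ∧ p = fun i ↦ (rowCount C i : ℝ) := by
  constructor
  · rintro ⟨hp, hint⟩
    choose m hm using hint
    have hnonneg (i : Fin n) : 0 ≤ m i := by exact_mod_cast hm i ▸ hp.1 i
    lift m to Fin n → ℕ using hnonneg
    obtain rfl : p = fun i ↦ (m i : ℝ) := funext fun i ↦ by simpa using hm i
    obtain ⟨-, hsum, hle⟩ := hp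
    simp only [← Nat.cast_sum, Nat.cast_inj, Nat.cast_le] at hsum hle
    obtain ⟨C, hC, rfl⟩ := exists_domLE_rowCount_eq hsum hle
    exact ⟨C, hC, rfl⟩
  · rintro ⟨C, hC, rfl⟩
    exact ⟨rowCount_mem_schubitope hC, fun i ↦ ⟨rowCount C i, by simp⟩⟩

end Lattice

/-- The lattice points of the Schubitope `S_D` are exactly the vectors `ξ^C`,
`ξ^C_i = #{j : i ∈ C_j}`, over tuples `C = (C_1, …, C_n)` with `C_j ≤ D_j` for all `j`;
moreover `S_D` is the convex hull of this set of lattice points. -/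
theorem stmt7 (n : ℕ) (D : Finset (Fin n × Fin n)) :
    ({p : Fin n → ℝ | p ∈ schubitope D ∧ ∀ i, ∃ m : ℤ, p i = (m : ℝ)} =
      {p : Fin n → ℝ | ∃ C : Fin n → Finset (Fin n),
        (∀ j, DomLE (C j) (colSet D j)) ∧
        p = fun i => ((Finset.univ.filter fun j => i ∈ C j).card : ℝ)}) ∧
    schubitope D =
      convexHull ℝ {p : Fin n → ℝ | ∃ C : Fin n → Finset (Fin n),
        (∀ j, DomLE (C j) (colSet D j)) ∧
        p = fun i => ((Finset.univ.filter fun j => i ∈ C j).card : ℝ)} := by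
  have lattice : {p : Fin n → ℝ | p ∈ schubitope D ∧ ∀ i, ∃ m : ℤ, p i = (m : ℝ)} =
      {p : Fin n → ℝ | ∃ C : Fin n → Finset (Fin n), (∀ j, DomLE (C j) (colSet D j)) ∧
        p = fun i ↦ ((Finset.univ.filter fun j ↦ i ∈ C j).card : ℝ)} :=
    Set.ext fun _ ↦ mem_schubitope_and_int_iff
  exact ⟨lattice, lattice ▸ schubitope_eq_convexHull_int D⟩
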